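/- Let p > 1 and a > 0. Let f ≡ 0 and let g ∈ C¹(ℝ) satisfy g ≥ 0 on ℝ, g not identically zero, and ∫_{−1}^{1} g(y) dy > 0. Then there exist positive constants ε₀ = ε₀(g,a,p) and C = C(g,a,p) such that for every ε with 0 < ε ≤ ε₀ and every T > C·ε^{−(p−1)}, there is no function u ∈ C(ℝ×[0,T]) satisfying u(x,t) = (ε/2)∫_{x−t}^{x+t} g(y) dy + (1/2)∬_{D(x,t)} |u(y,s)|^p (1+y²)^{−(1+a)/2} dy ds for all (x,t) ∈ ℝ×[0,T]. In particular the lifespan satisfies T_ε ≤ C·ε^{−(p−1)}. -/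

import Mathlib

open MeasureTheory Real Set Filter

lemma aux_inner_cont (F : ℝ → ℝ → ℝ) (hF : Continuous (Function.uncurry F)) (x t : ℝ) :
    Continuous (fun s : ℝ => ∫ y in (x - t + s)..(x + t - s), F y s) := by
  have hF' : Continuous (Function.uncurry (fun s y => F y s)) :=
    hF.comp (continuous_snd.prodMk continuous_fst)
  have h1 : Continuous (fun s : ℝ => ∫ y in (0:ℝ)..(x + t - s), F y s) :=
    intervalIntegral.continuous_parametric_intervalIntegral_of_continuous hF' (by fun_prop)
  have h2 : Continuous (fun s : ℝ => ∫ y in (0:ℝ)..(x - t + s), F y s) :=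
    intervalIntegral.continuous_parametric_intervalIntegral_of_continuous hF' (by fun_prop)
  have hs : ∀ s, Continuous (fun y => F y s) := fun s =>
    hF.comp (continuous_id.prodMk continuous_const)
  refine (h1.sub h2).congr fun s => ?_
  simp only [Pi.sub_apply]
  rw [intervalIntegral.integral_interval_sub_left] <;> exact (hs s).intervalIntegrable _ _

lemma aux_sub (f : ℝ → ℝ) (hf : Continuous f) (h0 : ∀ y, 0 ≤ f y) {a b c d B : ℝ}
    (hac : a ≤ c) (hcd : c ≤ d) (hdb : d ≤ b) (hB : ∀ y ∈ Icc c d, B ≤ f y) :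
    (d - c) * B ≤ ∫ y in a..b, f y := by
  calc (d - c) * B = ∫ y in c..d, B := by simp
    _ ≤ ∫ y in c..d, f y := intervalIntegral.integral_mono_on hcd (by simp)
        (hf.intervalIntegrable _ _) hB
    _ ≤ ∫ y in a..b, f y := intervalIntegral.integral_mono_interval hac hcd hdb
        (Eventually.of_forall h0) (hf.intervalIntegrable _ _)

lemma aux_dbl (F : ℝ → ℝ → ℝ) (hF : Continuous (Function.uncurry F))
    (h0 : ∀ y s, 0 ≤ F y s) (B x t τ h : ℝ) (hB : 0 ≤ B) (hx : x ∈ Icc (-1:ℝ) 1)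
    (hτ : 0 ≤ τ) (hh : 0 < h) (ht : τ + h ≤ t)
    (hFB : ∀ y ∈ Icc (-1:ℝ) 1, ∀ s ∈ Icc τ t, B ≤ F y s) :
    h / 2 * (min 1 (h / 2) * B) ≤
      ∫ s in (0:ℝ)..t, ∫ y in (x - t + s)..(x + t - s), F y s := by
  have hs : ∀ s, Continuous (fun y => F y s) := fun s =>
    hF.comp (continuous_id.prodMk continuous_const)
  have hm1 : min 1 (h/2) ≤ 1 := min_le_left _ _
  have hm2 : min 1 (h/2) ≤ h/2 := min_le_right _ _
  have hm0 : 0 < min 1 (h/2) := by positivity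
  set m := min 1 (h/2)
  obtain ⟨hx1, hx2⟩ := hx
  have hlow : ∀ s ∈ Icc τ (τ + h/2),
      m * B ≤ ∫ y in (x - t + s)..(x + t - s), F y s := by
    rintro s ⟨hs1, hs2⟩
    rcases le_total 0 x with hx0 | hx0
    · have := aux_sub (fun y => F y s) (hs s) (fun y => h0 y s) (a := x - t + s) (b := x + t - s)
        (c := x - m) (d := x) (B := B) (by linarith) (by linarith) (by linarith)
        (fun y hy => hFB y ⟨by linarith [hy.1], by linarith [hy.2]⟩ s ⟨hs1, by linarith⟩)
      simpa using this
    · have := aux_sub (fun y => F y s) (hs s) (fun y => h0 y s) (a := x - t + s) (b := x + t - s)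
        (c := x) (d := x + m) (B := B) (by linarith) (by linarith) (by linarith)
        (fun y hy => hFB y ⟨by linarith [hy.1], by linarith [hy.2]⟩ s ⟨hs1, by linarith⟩)
      simpa using this
  have hc := aux_inner_cont F hF x t
  calc h / 2 * (m * B) = ∫ s in τ..(τ + h/2), m * B := by
        rw [intervalIntegral.integral_const, smul_eq_mul]; ring
    _ ≤ ∫ s in τ..(τ + h/2), ∫ y in (x - t + s)..(x + t - s), F y s :=
        intervalIntegral.integral_mono_on (by linarith) (by simp)
          (hc.intervalIntegrable _ _) hlow
    _ ≤ _ := by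
      refine intervalIntegral.integral_mono_interval hτ (by linarith) (by linarith) ?_
        (hc.intervalIntegrable _ _)
      refine (ae_restrict_iff' measurableSet_Ioc).2 (Eventually.of_forall ?_)
      intro s hs'
      exact intervalIntegral.integral_nonneg (by linarith [hs'.2]) (fun y _ => h0 y s)

lemma aux_alg (K E r w q M P : ℝ) (hK : 1 ≤ K) (hE : 1 ≤ E) (hr : 0 < r) (hr1 : r ≤ 1)
    (hw : 0 < w) (hq : 0 < q) (hKwq : 16 ≤ K * (w * q)) (hM : 0 < M)
    (hP : P * (E * r ^ 2) = q) :
    2 * M ≤ 1 / 2 * (K * E * r / 2 * (min 1 (K * E * r / 2) * (M * P * w))) := by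
  have hEr : 0 < E * r ^ 2 := by positivity
  have hPe : P = q / (E * r ^ 2) := by field_simp; linarith
  have hE0 : 0 < E := by linarith
  have hK0 : 0 < K := by linarith
  have key : 4 ≤ K * E * r / 2 * (min 1 (K * E * r / 2) * (P * w)) := by
    rcases min_choice 1 (K * E * r / 2) with h | h <;> rw [h, hPe]
    · have : K * E * r / 2 * (1 * (q / (E * r ^ 2) * w)) = K * (w * q) / (2 * r) := by
        field_simp
      rw [this, le_div_iff₀ (by positivity)]
      linarith
    · have : K * E * r / 2 * (K * E * r / 2 * (q / (E * r ^ 2) * w)) = K * E * (K * (w * q)) / 4 := by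
        field_simp; ring
      rw [this]
      have : 1 ≤ K * E := by nlinarith
      nlinarith
  nlinarith [mul_le_mul_of_nonneg_left key hM.le]

theorem stmt_2 (p a : ℝ) (hp : 1 < p) (ha : 0 < a)
    (g : ℝ → ℝ) (hg : ContDiff ℝ 1 g) (hgpos : ∀ x, 0 ≤ g x)
    (hgne : ∃ x, g x ≠ 0) (hgint : 0 < ∫ y in (-1:ℝ)..1, g y) :
    ∃ ε₀ > (0:ℝ), ∃ C > (0:ℝ), ∀ ε : ℝ, 0 < ε → ε ≤ ε₀ →
      ∀ T : ℝ, C * ε ^ (-(p - 1)) < T →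
        ¬ ∃ u : ℝ → ℝ → ℝ,
            ContinuousOn (fun q : ℝ × ℝ => u q.1 q.2) (Set.univ ×ˢ Set.Icc 0 T) ∧
            ∀ x t : ℝ, t ∈ Set.Icc (0:ℝ) T →
              u x t = ε / 2 * (∫ y in (x - t)..(x + t), g y)
                + 1 / 2 * ∫ s in (0:ℝ)..t, ∫ y in (x - t + s)..(x + t - s),
                    |u y s| ^ p / (1 + y ^ 2) ^ ((1 + a) / 2) := by
  set G := ∫ y in (-1:ℝ)..1, g y with hG
  have hgc : Continuous g := hg.continuous
  set w : ℝ := ((2:ℝ) ^ ((1 + a) / 2))⁻¹ with hw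
  have hw0 : 0 < w := by positivity
  set q : ℝ := (G / 2) ^ (p - 1) with hq
  have hq0 : 0 < q := by positivity
  set ρ : ℝ := (2:ℝ) ^ (-((p - 1) / 2)) with hρ
  have hρ0 : 0 < ρ := by positivity
  have hρ1 : ρ < 1 := Real.rpow_lt_one_of_one_lt_of_neg (by norm_num) (by linarith)
  set K : ℝ := 1 + 16 / (w * q) with hK
  have hK1 : 1 ≤ K := by
    have : 0 < 16 / (w * q) := by positivity
    linarith
  have hKwq : 16 ≤ K * (w * q) := by
    have : K * (w * q) = w * q + 16 := by rw [hK]; field_simp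
    have : 0 < w * q := by positivity
    linarith
  have hρ' : 0 < 1 - ρ := by linarith
  refine ⟨1, one_pos, 2 + K / (1 - ρ), by positivity, ?_⟩
  rintro ε hε hε1 T hT ⟨u, huc, hu⟩
  set E : ℝ := ε ^ (-(p - 1)) with hE
  have hE1 : 1 ≤ E := Real.one_le_rpow_of_pos_of_le_one_of_nonpos hε hε1 (by linarith)
  have hTT : 2 + K * E / (1 - ρ) < T := by
    have : (2 + K / (1 - ρ)) * E = 2 * E + K * E / (1 - ρ) := by ring
    linarith
  have hT0 : 0 ≤ T := by
    have : 0 < K * E / (1 - ρ) := by positivity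
    linarith
  -- the extended source term
  let F : ℝ → ℝ → ℝ := fun y s =>
    |u y (max 0 (min s T))| ^ p / (1 + y ^ 2) ^ ((1 + a) / 2)
  have hFc : Continuous (Function.uncurry F) := by
    have h1 : Continuous (fun z : ℝ × ℝ => u z.1 (max 0 (min z.2 T))) := by
      refine huc.comp_continuous (f := fun z : ℝ × ℝ => (z.1, max 0 (min z.2 T)))
        (by fun_prop) ?_
      intro z
      exact ⟨trivial, le_max_left _ _, max_le hT0 (min_le_right _ _)⟩
    refine Continuous.div (h1.abs.rpow_const fun _ => Or.inr (by linarith)) ?_ ?_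
    · refine Continuous.rpow_const (by fun_prop) fun z => Or.inl ?_
      positivity
    · intro z
      positivity
  have hF0 : ∀ y s, 0 ≤ F y s := fun y s => by positivity
  have hFe : ∀ y s, s ∈ Icc (0:ℝ) T → F y s = |u y s| ^ p / (1 + y ^ 2) ^ ((1 + a) / 2) := by
    intro y s hs
    simp only [F, min_eq_left hs.2, max_eq_right hs.1]
  have hu' : ∀ x t : ℝ, t ∈ Icc (0:ℝ) T → u x t = ε / 2 * (∫ y in (x - t)..(x + t), g y)
                + 1 / 2 * ∫ s in (0:ℝ)..t, ∫ y in (x - t + s)..(x + t - s), F y s := by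
    intro x t ht
    rw [hu x t ht]
    congr 2
    refine intervalIntegral.integral_congr fun s hs => ?_
    rw [uIcc_of_le ht.1] at hs
    refine intervalIntegral.integral_congr fun y _ => ?_
    exact (hFe y s ⟨hs.1, hs.2.trans ht.2⟩).symm
  set M0 : ℝ := ε * G / 2 with hM0
  have hM0p : 0 < M0 := by positivity
  let τ : ℕ → ℝ := fun j => 2 + K * E * ∑ i ∈ Finset.range j, ρ ^ i
  have hτ2 : ∀ j, 2 ≤ τ j := fun j => by
    have : 0 ≤ K * E * ∑ i ∈ Finset.range j, ρ ^ i := by positivity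
    simp only [τ]; linarith
  have hτT : ∀ j, τ j ≤ T := fun j => by
    have h1 : ∑ i ∈ Finset.range j, ρ ^ i ≤ (1 - ρ)⁻¹ := by
      rw [← tsum_geometric_of_lt_one hρ0.le hρ1]
      exact (summable_geometric_of_lt_one hρ0.le hρ1).sum_le_tsum _ (fun i _ => by positivity)
    have h2 : K * E * ∑ i ∈ Finset.range j, ρ ^ i ≤ K * E * (1 - ρ)⁻¹ :=
      mul_le_mul_of_nonneg_left h1 (by positivity)
    simp only [τ]; rw [div_eq_mul_inv] at hTT; linarith
  have main : ∀ j : ℕ, ∀ x ∈ Icc (-1:ℝ) 1, ∀ t ∈ Icc (τ j) T, 2 ^ j * M0 ≤ u x t := by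
    intro j
    induction j with
    | zero =>
      intro x hx t ht
      have ht2 := (hτ2 0).trans ht.1
      rw [hu' x t ⟨by linarith, ht.2⟩]
      have h1 : G ≤ ∫ y in (x - t)..(x + t), g y :=
        intervalIntegral.integral_mono_interval (by linarith [hx.2]) (by norm_num)
          (by linarith [hx.1]) (Eventually.of_forall hgpos) (hgc.intervalIntegrable _ _)
      have h2 : 0 ≤ ∫ s in (0:ℝ)..t, ∫ y in (x - t + s)..(x + t - s), F y s :=
        intervalIntegral.integral_nonneg (by linarith) fun s hs =>
          intervalIntegral.integral_nonneg (by linarith [hs.2]) fun y _ => hF0 y s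
      have h3 := mul_le_mul_of_nonneg_left h1 (by positivity : 0 ≤ ε / 2)
      simp only [pow_zero, one_mul, hM0]
      linarith
    | succ j ih =>
      intro x hx t ht
      have hr0 : 0 < ρ ^ j := by positivity
      have hr1 : ρ ^ j ≤ 1 := pow_le_one₀ hρ0.le hρ1.le
      have hτs : τ (j + 1) = τ j + K * E * ρ ^ j := by
        simp only [τ, Finset.sum_range_succ]; ring
      have hh : 0 < K * E * ρ ^ j := by positivity
      have ht2 := (hτ2 (j+1)).trans ht.1
      rw [hu' x t ⟨by linarith, ht.2⟩]
      set M : ℝ := 2 ^ j * M0 with hM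
      have hMp : 0 < M := by positivity
      have hMP : M ^ p = M * M ^ (p - 1) := by
        rw [Real.rpow_sub_one hMp.ne']; field_simp
      have hFB : ∀ y ∈ Icc (-1:ℝ) 1, ∀ s ∈ Icc (τ j) t, M * M ^ (p - 1) * w ≤ F y s := by
        intro y hy s hs
        rw [hFe y s ⟨by linarith [hτ2 j, hs.1], hs.2.trans ht.2⟩, ← hMP, div_eq_mul_inv]
        have h1 : M ≤ u y s := ih y hy s ⟨hs.1, hs.2.trans ht.2⟩
        have h2 : M ^ p ≤ |u y s| ^ p :=
          Real.rpow_le_rpow hMp.le (h1.trans (le_abs_self _)) (by linarith)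
        have h3 : w ≤ ((1 + y ^ 2) ^ ((1 + a) / 2))⁻¹ := by
          rw [hw]
          apply inv_anti₀ (by positivity)
          apply Real.rpow_le_rpow (by positivity) _ (by linarith)
          nlinarith [hy.1, hy.2]
        exact mul_le_mul h2 h3 hw0.le (by positivity)
      have hd := aux_dbl F hFc hF0 (M * M ^ (p - 1) * w) x t (τ j) (K * E * ρ ^ j)
        (by positivity) hx (by linarith [hτ2 j]) hh (by rw [← hτs]; exact ht.1) hFB
      have hP : M ^ (p - 1) * (E * (ρ ^ j) ^ 2) = q := by
        have e1 : ((2:ℝ) ^ j) ^ (p - 1) * (ρ ^ j) ^ 2 = 1 := by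
          rw [hρ, ← Real.rpow_natCast, ← Real.rpow_natCast, ← Real.rpow_natCast,
            ← Real.rpow_mul (by norm_num), ← Real.rpow_mul (by positivity),
            ← Real.rpow_mul (by norm_num), ← Real.rpow_add (by norm_num)]
          rw [show (j:ℝ) * (p - 1) + -((p - 1) / 2) * ((j:ℝ) * ((2:ℕ):ℝ)) = 0 by
            push_cast; ring, Real.rpow_zero]
        have e2 : M0 ^ (p - 1) * E = q := by
          rw [hM0, mul_div_assoc, Real.mul_rpow hε.le (by positivity), hE, hq, Real.rpow_neg hε.le]
          have : ε ^ (p - 1) ≠ 0 := by positivity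
          field_simp
        rw [hM, Real.mul_rpow (by positivity) hM0p.le]
        calc _ = (((2:ℝ) ^ j) ^ (p - 1) * (ρ ^ j) ^ 2) * (M0 ^ (p - 1) * E) := by ring
          _ = q := by rw [e1, e2, one_mul]
      have ha := aux_alg K E (ρ ^ j) w q M (M ^ (p - 1)) hK1 hE1 hr0 hr1 hw0 hq0 hKwq hMp hP
      have hg0 : 0 ≤ ∫ y in (x - t)..(x + t), g y :=
        intervalIntegral.integral_nonneg (by linarith) fun y _ => hgpos y
      have hg1 : 0 ≤ ε / 2 * ∫ y in (x - t)..(x + t), g y := by positivity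
      have : (2:ℝ) ^ (j + 1) * M0 = 2 * M := by rw [hM]; ring
      rw [this]
      linarith
  obtain ⟨n, hn⟩ := pow_unbounded_of_one_lt (u 0 T / M0) (by norm_num : (1:ℝ) < 2)
  have := main n 0 (by constructor <;> norm_num) T ⟨hτT n, le_rfl⟩
  rw [div_lt_iff₀ hM0p] at hn
  linarith
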